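/- Let 𝓓 = (Ω, 𝓑) be a β(i) design with parameter (v, k, d), i ≥ 2, c = k−d, b = |𝓑| and n = |S₁|. Then n·(v−k+c−2i+2)·(v−k+c−2i+3)·(v−k+c−2i+4) = b·F(v−k), where F(x) = C(x, i−2)·(p·x² + q·x + r) with p = −(i−2)·C(k, d+i−1), q = −(1/(i−1))·C(k, d+i−1)·( d³ − (k−6i+7)d² − ((5i−6)k − (i−1)(9i−11))d − (i−1)(4i−5)k + (i−1)(2i²−2i−1) ), and r = (1/(i−1))·C(k, d+i−1)·( (2i−3)d³ − (3i−4)(k−3i+4)d² + ((i−1)k² − (9i²−23i+15)k + (i−1)(12i²−33i+23))d + (i−1)²k² − (i−1)(6i²−16i+11)k + 2(2i−3)(i−1)³ ). -/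

import Mathlib

open Finset

variable {α : Type*} [Fintype α] [DecidableEq α]

/-- `𝓑` is a design on the finite type `α` of cardinality `v`, with block size `k` and
maximal pairwise block intersection size `d`. -/
def IsDesign (𝓑 : Finset (Finset α)) (v k d : ℕ) : Prop :=
  Fintype.card α = v ∧ 2 ≤ 𝓑.card ∧ d < k ∧ k < v ∧
  (∀ B ∈ 𝓑, B.card = k) ∧
  (∀ B ∈ 𝓑, ∀ C ∈ 𝓑, B ≠ C → (B ∩ C).card ≤ d) ∧
  (∃ B ∈ 𝓑, ∃ C ∈ 𝓑, B ≠ C ∧ (B ∩ C).card = d)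

/-- `𝓑` is a `β(i)` design with parameters `(v, k, d)`: a design such that
`1 ≤ i ≤ (v - d + 1)/2` and every `(d + 2i - 1)`-element subset `X` of `Ω` admits a
unique block `B` with `|X ∩ B| ≥ d + i`. -/
def IsBetaDesign (𝓑 : Finset (Finset α)) (v k d i : ℕ) : Prop :=
  IsDesign 𝓑 v k d ∧ 1 ≤ i ∧ 2 * i ≤ v - d + 1 ∧
  ∀ X : Finset α, X.card = d + 2 * i - 1 →
    ∃! B, B ∈ 𝓑 ∧ d + i ≤ (X ∩ B).card

/-- The family `S₁` of all `(d + 2(i-2))`-element subsets `X` of `Ω` such that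
`|X ∩ B| ≤ d + i - 2` for every block `B ∈ 𝓑`. -/
def S1 (𝓑 : Finset (Finset α)) (d i : ℕ) : Finset (Finset α) :=
  (Finset.univ : Finset (Finset α)).filter
    (fun X => X.card = d + 2 * (i - 2) ∧ ∀ B ∈ 𝓑, (X ∩ B).card ≤ d + i - 2)

/-- Number of sets of size `s + N - 1` meeting a `k`-block in at least `s` points
(with `x` points outside the block), in recursive form. -/
def UU (k x : ℕ) : ℕ → ℕ → ℕ
  | _, 0 => 0
  | s, N + 1 => k.choose s * x.choose N + UU k x (s + 1) N

theorem choose_step (k s : ℕ) :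
    ((s : ℝ) + 1) * (k.choose (s + 1) : ℝ) = ((k : ℝ) - s) * (k.choose s : ℝ) := by
  rcases le_or_gt s k with h | h
  · have := Nat.choose_succ_right_eq k s
    have h2 : ((k.choose (s + 1) * (s + 1) : ℕ) : ℝ) = ((k.choose s * (k - s) : ℕ) : ℝ) := by
      rw [this]
    push_cast [Nat.cast_sub h] at h2
    linarith
  · rw [Nat.choose_eq_zero_of_lt h, Nat.choose_eq_zero_of_lt (by omega)]
    simp

theorem UU_rec (k x N : ℕ) : ∀ s : ℕ,
    ((s : ℝ) + N) * (UU k x s (N + 1) : ℝ) =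
      ((k : ℝ) + x - s - N + 1) * (UU k x s N : ℝ) + s * ((k.choose s : ℝ) * (x.choose N : ℝ)) := by
  induction N with
  | zero => intro s; simp [UU]
  | succ N ih =>
    intro s
    have h := ih (s + 1)
    have e1 : (UU k x s (N + 1 + 1) : ℝ) =
        (k.choose s : ℝ) * (x.choose (N + 1) : ℝ) + (UU k x (s + 1) (N + 1) : ℝ) := by
      rw [UU]; push_cast; ring
    have e2 : (UU k x s (N + 1) : ℝ) =
        (k.choose s : ℝ) * (x.choose N : ℝ) + (UU k x (s + 1) N : ℝ) := by
      rw [UU]; push_cast; ring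
    rw [e1, e2]
    have a := choose_step k s
    have c := choose_step x N
    push_cast at h ⊢
    linear_combination h + (k.choose s : ℝ) * c + (x.choose N : ℝ) * a

theorem card_eq_aux (B : Finset α) (s N : ℕ) :
    ((Finset.univ : Finset (Finset α)).filter
      (fun X => X.card = s + N ∧ (X ∩ B).card = s)).card
      = B.card.choose s * (Fintype.card α - B.card).choose N := by
  rw [← Finset.card_compl, ← Finset.card_powersetCard, ← Finset.card_powersetCard,
    ← Finset.card_product]
  refine Finset.card_bij' (fun X _ => (X ∩ B, X \ B)) (fun P _ => P.1 ∪ P.2) ?_ ?_ ?_ ?_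
  · intro X hX
    simp only [Finset.mem_filter, Finset.mem_univ, true_and] at hX
    have := Finset.card_inter_add_card_sdiff X B
    simp only [Finset.mem_product, Finset.mem_powersetCard]
    refine ⟨⟨Finset.inter_subset_right, hX.2⟩, ?_, by omega⟩
    intro a ha
    simp at ha ⊢
    exact ha.2
  · rintro ⟨P, Q⟩ h
    simp only [Finset.mem_product, Finset.mem_powersetCard] at h
    obtain ⟨⟨h1, h2⟩, h3, h4⟩ := h
    have hd : Disjoint P Q := by
      rw [Finset.disjoint_left]; intro a ha hq
      have := h3 hq
      simp at this
      exact this (h1 ha)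
    have : (P ∪ Q) ∩ B = P := by
      ext a
      have := @h1 a
      have := @h3 a
      simp at *
      tauto
    simp only [Finset.mem_filter, Finset.mem_univ, true_and, this]
    rw [Finset.card_union_of_disjoint hd]
    exact ⟨by omega, h2⟩
  · intro X _
    ext a; simp; tauto
  · rintro ⟨P, Q⟩ h
    simp only [Finset.mem_product, Finset.mem_powersetCard] at h
    obtain ⟨⟨h1, h2⟩, h3, h4⟩ := h
    ext a
    · have := @h1 a
      have := @h3 a
      simp at *
      tauto
    · have := @h1 a
      have := @h3 a
      simp at *
      tauto

theorem card_ge_aux (B : Finset α) (m N : ℕ) : ∀ s : ℕ, m + 1 = s + N →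
    ((Finset.univ : Finset (Finset α)).filter
      (fun X => X.card = m ∧ s ≤ (X ∩ B).card)).card
      = UU B.card (Fintype.card α - B.card) s N := by
  induction N with
  | zero =>
    intro s h
    rw [UU, Finset.card_eq_zero, Finset.filter_eq_empty_iff]
    rintro X - ⟨h1, h2⟩
    have := Finset.card_le_card (Finset.inter_subset_left : X ∩ B ⊆ X)
    omega
  | succ N ih =>
    intro s h
    rw [UU, ← ih (s + 1) (by omega), ← card_eq_aux, ← Finset.card_union_of_disjoint]
    · congr 1
      ext X
      simp only [Finset.mem_filter, Finset.mem_univ, true_and, Finset.mem_union]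
      omega
    · rw [Finset.disjoint_left]
      intro X h1 h2
      simp only [Finset.mem_filter, Finset.mem_univ, true_and] at h1 h2
      omega

theorem sum_count (𝓑 : Finset (Finset α)) (k m s N : ℕ) (hk : ∀ B ∈ 𝓑, B.card = k)
    (h : m + 1 = s + N) :
    ∑ X ∈ (Finset.univ : Finset α).powersetCard m, (𝓑.filter (fun B => s ≤ (X ∩ B).card)).card
      = 𝓑.card * UU k (Fintype.card α - k) s N := by
  have := Finset.sum_card_bipartiteAbove_eq_sum_card_bipartiteBelow
    (s := (Finset.univ : Finset α).powersetCard m) (t := 𝓑) (fun X B => s ≤ (X ∩ B).card)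
  simp only [Finset.bipartiteAbove, Finset.bipartiteBelow] at this
  rw [this, Finset.sum_const_nat]
  intro B hB
  rw [← hk B hB, ← card_ge_aux B m N s h]
  congr 1
  ext X
  simp [Finset.mem_powersetCard]

theorem block_unique (𝓑 : Finset (Finset α)) (d : ℕ)
    (hd : ∀ B ∈ 𝓑, ∀ C ∈ 𝓑, B ≠ C → (B ∩ C).card ≤ d) (X B C : Finset α)
    (hB : B ∈ 𝓑) (hC : C ∈ 𝓑) (s : ℕ) (h1 : s ≤ (X ∩ B).card) (h2 : s ≤ (X ∩ C).card)
    (h : X.card + d < 2 * s) : B = C := by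
  by_contra hne
  have h3 := hd B hB C hC hne
  have h4 := Finset.card_union_add_card_inter (X ∩ B) (X ∩ C)
  have h5 : ((X ∩ B) ∪ (X ∩ C)).card ≤ X.card :=
    Finset.card_le_card (Finset.union_subset Finset.inter_subset_left Finset.inter_subset_left)
  have h6 : ((X ∩ B) ∩ (X ∩ C)).card ≤ (B ∩ C).card :=
    Finset.card_le_card (by intro a; simp; tauto)
  omega

/-- **Proposition 5.4.** Let `𝓑` be a `β(i)` design with parameter `(v, k, d)`, `i ≥ 2`,
`c = k - d`, `b = |𝓑|`, `n = |S₁|`.  Then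
`n = b F(v-k) / ((v-k+c-2i+2)(v-k+c-2i+3)(v-k+c-2i+4))`, where
`F(x) = C(x, i-2) (p x² + q x + r)` with `p, q, r` as below. -/
theorem prop5_4 (𝓑 : Finset (Finset α)) (v k d i c : ℕ)
    (hB : IsBetaDesign 𝓑 v k d i) (hi : 2 ≤ i) (hc : c = k - d)
    (n : ℕ) (hn : n = (S1 𝓑 d i).card)
    (p q r : ℝ)
    (hp : p = -((i : ℝ) - 2) * (k.choose (d + i - 1) : ℝ))
    (hq : q = -(1 / ((i : ℝ) - 1)) * (k.choose (d + i - 1) : ℝ) *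
      ((d : ℝ) ^ 3 - ((k : ℝ) - 6 * (i : ℝ) + 7) * (d : ℝ) ^ 2
        - ((5 * (i : ℝ) - 6) * (k : ℝ) - ((i : ℝ) - 1) * (9 * (i : ℝ) - 11)) * (d : ℝ)
        - ((i : ℝ) - 1) * (4 * (i : ℝ) - 5) * (k : ℝ)
        + ((i : ℝ) - 1) * (2 * (i : ℝ) ^ 2 - 2 * (i : ℝ) - 1)))
    (hr : r = (1 / ((i : ℝ) - 1)) * (k.choose (d + i - 1) : ℝ) *
      ((2 * (i : ℝ) - 3) * (d : ℝ) ^ 3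
        - (3 * (i : ℝ) - 4) * ((k : ℝ) - 3 * (i : ℝ) + 4) * (d : ℝ) ^ 2
        + (((i : ℝ) - 1) * (k : ℝ) ^ 2 - (9 * (i : ℝ) ^ 2 - 23 * (i : ℝ) + 15) * (k : ℝ)
            + ((i : ℝ) - 1) * (12 * (i : ℝ) ^ 2 - 33 * (i : ℝ) + 23)) * (d : ℝ)
        + ((i : ℝ) - 1) ^ 2 * (k : ℝ) ^ 2
        - ((i : ℝ) - 1) * (6 * (i : ℝ) ^ 2 - 16 * (i : ℝ) + 11) * (k : ℝ)
        + 2 * (2 * (i : ℝ) - 3) * ((i : ℝ) - 1) ^ 3)) :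
    (n : ℝ) * (((v : ℝ) - (k : ℝ) + (c : ℝ) - 2 * (i : ℝ) + 2)
        * ((v : ℝ) - (k : ℝ) + (c : ℝ) - 2 * (i : ℝ) + 3)
        * ((v : ℝ) - (k : ℝ) + (c : ℝ) - 2 * (i : ℝ) + 4)) =
      (𝓑.card : ℝ) * (((v - k).choose (i - 2) : ℝ)
        * (p * ((v : ℝ) - (k : ℝ)) ^ 2 + q * ((v : ℝ) - (k : ℝ)) + r)) := by
  obtain ⟨⟨hv, h2, hdk, hkv, hk, hd, -⟩, -, hiv, hX⟩ := hB
  obtain ⟨N, rfl⟩ : ∃ N, i = N + 2 := ⟨i - 2, by omega⟩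
  have E1 : v.choose (d + 2 * N + 3) = 𝓑.card * UU k (v - k) (d + N + 2) (N + 2) := by
    rw [← hv, ← sum_count 𝓑 k (d + 2 * N + 3) (d + N + 2) (N + 2) hk (by omega),
      ← Finset.card_univ, ← Finset.card_powersetCard, Finset.card_eq_sum_ones]
    refine Finset.sum_congr rfl ?_
    intro X hX'
    rw [Finset.mem_powersetCard] at hX'
    obtain ⟨B, hB1, hB2⟩ := hX X (by omega)
    symm
    rw [Finset.card_eq_one]
    refine ⟨B, ?_⟩
    ext C
    simp only [Finset.mem_filter, Finset.mem_singleton]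
    constructor
    · intro h; exact hB2 C ⟨h.1, by omega⟩
    · rintro rfl; exact ⟨hB1.1, by omega⟩
  have E2 : v.choose (d + 2 * N) = n + 𝓑.card * UU k (v - k) (d + N + 1) N := by
    have hS : S1 𝓑 d (N + 2) = ((Finset.univ : Finset α).powersetCard (d + 2 * N)).filter
        (fun X => ∀ B ∈ 𝓑, (X ∩ B).card ≤ d + N) := by
      ext X
      have e : d + (N + 2) - 2 = d + N := by omega
      simp [S1, Finset.mem_powersetCard, e]
    rw [hn, hS, Finset.card_filter, ← hv,
      ← sum_count 𝓑 k (d + 2 * N) (d + N + 1) N hk (by omega), ← Finset.sum_add_distrib,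
      ← Finset.card_univ, ← Finset.card_powersetCard, Finset.card_eq_sum_ones]
    refine Finset.sum_congr rfl ?_
    intro X hX'
    rw [Finset.mem_powersetCard] at hX'
    split_ifs with hs
    · have : 𝓑.filter (fun B => d + N + 1 ≤ (X ∩ B).card) = ∅ := by
        rw [Finset.filter_eq_empty_iff]
        intro B hB
        have := hs B hB
        omega
      rw [this]; rfl
    · push Not at hs
      obtain ⟨B, hB, hB'⟩ := hs
      have : 𝓑.filter (fun B => d + N + 1 ≤ (X ∩ B).card) = {B} := by
        ext C
        simp only [Finset.mem_filter, Finset.mem_singleton]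
        constructor
        · intro h
          exact block_unique 𝓑 d hd X C B h.1 hB (d + N + 1) h.2 hB' (by omega)
        · rintro rfl; exact ⟨hB, hB'⟩
      rw [this]; rfl
  obtain ⟨x, rfl⟩ : ∃ x, v = k + x := ⟨v - k, by omega⟩
  have hx : k + x - k = x := by omega
  rw [hx] at E1 E2 ⊢
  have R0 := UU_rec k x N (d + N + 1)
  have R1 := UU_rec k x (N + 1) (d + N + 1)
  have R2 := UU_rec k x (N + 2) (d + N + 1)
  have e3 : (UU k x (d + N + 1) (N + 2 + 1) : ℝ) =
      (k.choose (d + N + 1) : ℝ) * (x.choose (N + 2) : ℝ) + (UU k x (d + N + 2) (N + 2) : ℝ) := by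
    rw [UU]; push_cast; ring
  have V0 := choose_step (k + x) (d + 2 * N)
  have V1 := choose_step (k + x) (d + 2 * N + 1)
  have V2 := choose_step (k + x) (d + 2 * N + 2)
  have X0 := choose_step x N
  have X1 := choose_step x (N + 1)
  have E1' : ((k + x).choose (d + 2 * N + 3) : ℝ) =
      𝓑.card * (UU k x (d + N + 2) (N + 2) : ℝ) := by exact_mod_cast E1
  have E2' : ((k + x).choose (d + 2 * N) : ℝ) =
      n + 𝓑.card * (UU k x (d + N + 1) N : ℝ) := by exact_mod_cast E2
  have hcc : (c : ℝ) = k - d := by rw [hc, Nat.cast_sub hdk.le]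
  have hs : d + (N + 2) - 1 = d + N + 1 := by omega
  have hNN : N + 2 - 2 = N := by omega
  have hN1 : ((N : ℝ) + 1) ≠ 0 := by positivity
  have hN2 : (N : ℝ) + 2 - 1 = N + 1 := by ring
  rw [hs] at hp hq hr
  rw [hNN, hcc]
  push_cast at hp hq hr R0 R1 R2 V0 V1 V2 X0 X1 ⊢
  rw [hN2] at hq hr
  have V3 : ((k : ℝ) + x - (d + 2 * N)) * ((k : ℝ) + x - (d + 2 * N) - 1) *
      ((k : ℝ) + x - (d + 2 * N) - 2) * ((k + x).choose (d + 2 * N) : ℝ) =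
      ((d : ℝ) + 2 * N + 1) * ((d : ℝ) + 2 * N + 2) * ((d : ℝ) + 2 * N + 3) *
        ((k + x).choose (d + 2 * N + 3) : ℝ) := by
    linear_combination -((k : ℝ) + x - (d + 2 * N) - 1) * ((k : ℝ) + x - (d + 2 * N) - 2) * V0
      - ((d : ℝ) + 2 * N + 1) * ((k : ℝ) + x - (d + 2 * N) - 2) * V1
      - ((d : ℝ) + 2 * N + 1) * ((d : ℝ) + 2 * N + 2) * V2
  have U3 : ((d : ℝ) + 2 * N + 1) * ((d : ℝ) + 2 * N + 2) * ((d : ℝ) + 2 * N + 3) *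
        (UU k x (d + N + 1) (N + 2 + 1) : ℝ) =
      ((k : ℝ) + x - (d + 2 * N)) * ((k : ℝ) + x - (d + 2 * N) - 1) *
      ((k : ℝ) + x - (d + 2 * N) - 2) * (UU k x (d + N + 1) N : ℝ)
      + ((k : ℝ) + x - (d + 2 * N) - 1) * ((k : ℝ) + x - (d + 2 * N) - 2) * (d + N + 1) *
        ((k.choose (d + N + 1) : ℝ) * (x.choose N : ℝ))
      + ((d : ℝ) + 2 * N + 1) * ((k : ℝ) + x - (d + 2 * N) - 2) * (d + N + 1) *
        ((k.choose (d + N + 1) : ℝ) * (x.choose (N + 1) : ℝ))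
      + ((d : ℝ) + 2 * N + 1) * ((d : ℝ) + 2 * N + 2) * (d + N + 1) *
        ((k.choose (d + N + 1) : ℝ) * (x.choose (N + 2) : ℝ)) := by
    linear_combination ((k : ℝ) + x - (d + 2 * N) - 1) * ((k : ℝ) + x - (d + 2 * N) - 2) * R0
      + ((d : ℝ) + 2 * N + 1) * ((k : ℝ) + x - (d + 2 * N) - 2) * R1
      + ((d : ℝ) + 2 * N + 1) * ((d : ℝ) + 2 * N + 2) * R2
  rw [E1', E2'] at V3
  rw [e3] at U3
  have X0' : (x.choose (N + 1) : ℝ) = ((x : ℝ) - N) * (x.choose N : ℝ) / (N + 1) := by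
    rw [eq_div_iff hN1]; linarith
  have K : (n : ℝ) * (((k : ℝ) + x - (d + 2 * N)) * ((k : ℝ) + x - (d + 2 * N) - 1) *
      ((k : ℝ) + x - (d + 2 * N) - 2)) =
      (𝓑.card : ℝ) * (k.choose (d + N + 1) : ℝ) *
      (((k : ℝ) + x - (d + 2 * N) - 1) * ((k : ℝ) + x - (d + 2 * N) - 2) * (d + N + 1) *
        (x.choose N : ℝ)
      + ((d : ℝ) + 2 * N + 1) * (((k : ℝ) + x - (d + 2 * N) - 2) * (d + N + 1)
        - ((d : ℝ) + 2 * N + 2) * (x - (N + 1))) * (x.choose (N + 1) : ℝ)) := by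
    linear_combination V3 + (𝓑.card : ℝ) * U3 - (𝓑.card : ℝ) * (k.choose (d + N + 1) : ℝ) *
      ((d : ℝ) + 2 * N + 1) * ((d : ℝ) + 2 * N + 2) * X1
  rw [X0'] at K
  rw [hp, hq, hr]
  field_simp at K ⊢
  linear_combination K
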